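/- arXiv:1506.08773 — 4 statements merged into one kernel-verified Lean document; each statement's English description precedes it below -/
import Mathlib

section
/- Let (M,d) be a metric space with a fixed reference point o. For a ∈ (0,1) and κ > 0 set p_a(x) = (1+d(o,x))^a and ϖ(x,τ) = e^{κτ} e^{(1+τ)(1+d(o,x))}. Then for every a ∈ (0,1) and ε ∈ [0,1) there exists a constant C, depending only on a and ε, such that for every κ > 0, every T > 0, every x ∈ M and all times 0 ≤ σ < τ ≤ T one has p_a(x)·ϖ(x,σ) ≤ C κ^{−ε} (τ−σ)^{−(a+ε)} ϖ(x,τ). -/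
/-!
Put `s = τ - σ` and `r = 1 + d(o, x)`. Passing from time `σ` to time `τ` multiplies `ϖ(x, ·)` by
`e ^ (s * r) * e ^ (s * κ)`. Since `y ^ b ≤ b ^ b * e ^ y`, the first factor absorbs `(s * r) ^ a`
and the second absorbs `(s * κ) ^ ε`.
-/

open Real

theorem rpow_self_pos_of_nonneg {b : ℝ} (hb : 0 ≤ b) : 0 < b ^ b := by
  obtain rfl | hb := hb.eq_or_lt
  · simp
  · positivity

theorem rpow_le_rpow_self_mul_rpow_neg_mul_exp {b r s : ℝ} (hb : 0 ≤ b) (hr : 0 ≤ r)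
    (hs : 0 < s) : r ^ b ≤ b ^ b * s ^ (-b) * exp (s * r) :=
  calc r ^ b ≤ (b / s) ^ b * exp (s * r) := by
        simpa only [abs_of_nonneg hr, abs_of_pos hs] using
          ProbabilityTheory.rpow_abs_le_mul_exp_abs r hb hs.ne'
    _ = b ^ b * s ^ (-b) * exp (s * r) := by
        rw [div_rpow hb hs.le, rpow_neg hs.le, div_eq_mul_inv]

section Weights

variable {M : Type*} [PseudoMetricSpace M]

/-- The polynomial spatial weight `p_a(x) = (1 + d(o, x)) ^ a`. -/
noncomputable def polyWeight (o : M) (a : ℝ) (x : M) : ℝ :=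
  (1 + dist o x) ^ a

/-- The space-time weight `ϖ(x, τ) = e ^ (κ τ) * e ^ ((1 + τ) (1 + d(o, x)))`, whose growth in `τ`
compensates for the loss of a factor `polyWeight o a x`. -/
noncomputable def spaceTimeWeight (o : M) (κ : ℝ) (x : M) (τ : ℝ) : ℝ :=
  exp (κ * τ) * exp ((1 + τ) * (1 + dist o x))

theorem spaceTimeWeight_pos (o : M) (κ : ℝ) (x : M) (τ : ℝ) : 0 < spaceTimeWeight o κ x τ :=
  mul_pos (exp_pos _) (exp_pos _)

theorem spaceTimeWeight_eq_exp_mul_exp_mul (o : M) (κ : ℝ) (x : M) (σ τ : ℝ) :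
    spaceTimeWeight o κ x τ =
      exp ((τ - σ) * (1 + dist o x)) * exp ((τ - σ) * κ) * spaceTimeWeight o κ x σ := by
  simp only [spaceTimeWeight, ← exp_add]
  ring_nf

theorem weight_inequality_general {a ε κ σ τ : ℝ} (ha : 0 ≤ a) (hε : 0 ≤ ε) (hκ : 0 < κ)
    (hστ : σ < τ) (o x : M) :
    polyWeight o a x * spaceTimeWeight o κ x σ ≤
      a ^ a * ε ^ ε * κ ^ (-ε) * (τ - σ) ^ (-(a + ε)) * spaceTimeWeight o κ x τ := by
  have hs : 0 < τ - σ := sub_pos.mpr hστ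
  have space_factor : polyWeight o a x ≤
      a ^ a * (τ - σ) ^ (-a) * exp ((τ - σ) * (1 + dist o x)) :=
    rpow_le_rpow_self_mul_rpow_neg_mul_exp ha (by positivity) hs
  have time_factor : κ ^ ε ≤ ε ^ ε * (τ - σ) ^ (-ε) * exp ((τ - σ) * κ) :=
    rpow_le_rpow_self_mul_rpow_neg_mul_exp hε hκ.le hs
  have weight_nonneg := (spaceTimeWeight_pos o κ x σ).le
  calc polyWeight o a x * spaceTimeWeight o κ x σ
      = κ ^ (-ε) * (polyWeight o a x * κ ^ ε) * spaceTimeWeight o κ x σ := by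
        rw [rpow_neg hκ.le]
        field_simp
    _ ≤ κ ^ (-ε) * (a ^ a * (τ - σ) ^ (-a) * exp ((τ - σ) * (1 + dist o x)) *
          (ε ^ ε * (τ - σ) ^ (-ε) * exp ((τ - σ) * κ))) * spaceTimeWeight o κ x σ := by
        gcongr
    _ = a ^ a * ε ^ ε * κ ^ (-ε) * (τ - σ) ^ (-(a + ε)) * spaceTimeWeight o κ x τ := by
        rw [spaceTimeWeight_eq_exp_mul_exp_mul o κ x σ τ, neg_add, rpow_add hs]
        ring

end Weights

/-- The key property of the special weights `p_a(x) = (1+d(o,x))^a` and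
`ϖ(x,τ) = e^{κτ} e^{(1+τ)(1+d(o,x))}`: for `a ∈ (0,1)` and `ε ∈ [0,1)` there is a
constant `C`, depending only on `a` and `ε`, with
`p_a(x) ϖ(x,σ) ≤ C κ^{-ε} (τ-σ)^{-(a+ε)} ϖ(x,τ)` for all `κ > 0`, `T > 0`,
`x ∈ M` and `0 ≤ σ < τ ≤ T`. -/
theorem weight_inequality :
    ∀ a ε : ℝ, 0 < a → a < 1 → 0 ≤ ε → ε < 1 →
    ∃ C : ℝ, 0 < C ∧
      ∀ (M : Type) [MetricSpace M], ∀ (o : M) (κ T : ℝ), 0 < κ → 0 < T →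
        ∀ (x : M) (σ τ : ℝ), 0 ≤ σ → σ < τ → τ ≤ T →
          (1 + dist o x) ^ a *
              (Real.exp (κ * σ) * Real.exp ((1 + σ) * (1 + dist o x)))
            ≤ C * κ ^ (-ε) * (τ - σ) ^ (-(a + ε)) *
              (Real.exp (κ * τ) * Real.exp ((1 + τ) * (1 + dist o x))) := by
  intro a ε ha _ hε _
  exact ⟨a ^ a * ε ^ ε, mul_pos (rpow_self_pos_of_nonneg ha.le) (rpow_self_pos_of_nonneg hε),
    fun _ _ o _ _ hκ _ x _ _ _ hστ _ => weight_inequality_general ha.le hε hκ hστ o x⟩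
end

section
/- Let k ≥ 1 be an integer. Let m₁ : ℝ → ℝ be continuous, supported in [1/2,2], with vanishing moments ∫ x^i m₁(x) dx = 0 for all integers 0 ≤ i ≤ k−1, and let m₂ : ℝ → ℝ be k times continuously differentiable with support in [1/2,2]. For u > 0 write m_u(x) = u^{−1} m(x/u). Then: (i) the k-th iterated antiderivative F_k of m₁ (defined by integrating from −∞, k times) is itself supported in [1/2,2]; (ii) for all 0 < s ≤ t, the convolution m₁_s ∗ m₂_t is supported in [(s+t)/2, 2(s+t)] and satisfies the uniform bound ‖m₁_s ∗ m₂_t‖_∞ ≤ (s/t)^k t^{−1} ‖F_k‖_{L¹} ‖m₂^{(k)}‖_∞. -/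
open MeasureTheory

/-- The `k`-th iterated antiderivative (integrating from `−∞`) of a function on `ℝ`. -/
noncomputable def iterAnti (m : ℝ → ℝ) : ℕ → ℝ → ℝ
  | 0 => m
  | k + 1 => fun x => ∫ y in Set.Iic x, iterAnti m k y

/-!
Vanishing of `∫ m` makes the antiderivative of `m` compactly supported again, and integration by
parts turns the moment of order `i + 1` of `m` into the moment of order `i` of its antiderivative.
Hence `k` vanishing moments allow one to integrate `m₁` exactly `k` times without leaving its
support. For compactly supported functions a derivative may be moved across a convolution, so
`m₁ ⋆ g = F_k ⋆ g^{(k)}`. With `g` the rescaling of `m₂` by `t / s`, each derivative costs a factor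
`s / t`; the general pair of scales reduces to this one by rescaling the convolution as a whole.
-/

open scoped Convolution Pointwise

section Antiderivative

variable {E : Type*} [NormedAddCommGroup E] [NormedSpace ℝ E]

theorem support_integral_Iic_subset {α : Type*} [LinearOrder α] [MeasurableSpace α]
    {μ : Measure α} {f : α → E} {a b : α} (hf : Function.support f ⊆ Set.Icc a b)
    (hf_zero : ∫ x, f x ∂μ = 0) :
    Function.support (fun x => ∫ y in Set.Iic x, f y ∂μ) ⊆ Set.Icc a b := by
  have f_eq_zero {y : α} (hy : y ∉ Set.Icc a b) : f y = 0 :=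
    Function.notMem_support.mp fun hy' => hy (hf hy')
  refine fun x hx => ⟨?_, ?_⟩ <;> by_contra! hlt <;> refine hx ?_
  · exact setIntegral_eq_zero_of_forall_eq_zero fun y hy =>
      f_eq_zero fun hy' => (hy'.1.trans hy).not_gt hlt
  · refine (setIntegral_eq_integral_of_forall_compl_eq_zero fun y hy => ?_).trans hf_zero
    exact f_eq_zero fun hy' => hy (hy'.2.trans hlt.le)

variable [CompleteSpace E] {f : ℝ → E}

theorem hasDerivAt_integral_Iic {x : ℝ} (hf : Integrable f) (hfx : ContinuousAt f x) :
    HasDerivAt (fun x => ∫ y in Set.Iic x, f y) (f x) x := by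
  have split_at_zero : (fun x => ∫ y in Set.Iic x, f y) =
      fun x => (∫ y in Set.Iic 0, f y) + ∫ y in (0 : ℝ)..x, f y := by
    funext x
    rw [← intervalIntegral.integral_Iic_sub_Iic hf.integrableOn hf.integrableOn,
      add_sub_cancel]
  rw [split_at_zero]
  exact (intervalIntegral.integral_hasDerivAt_right hf.intervalIntegrable
    hf.aestronglyMeasurable.stronglyMeasurableAtFilter hfx).const_add _

theorem deriv_integral_Iic (hf : Integrable f) (hfc : Continuous f) :
    deriv (fun x => ∫ y in Set.Iic x, f y) = f :=
  funext fun _ => (hasDerivAt_integral_Iic hf hfc.continuousAt).deriv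

theorem contDiff_one_integral_Iic (hf : Integrable f) (hfc : Continuous f) :
    ContDiff ℝ 1 fun x => ∫ y in Set.Iic x, f y := by
  refine contDiff_one_iff_deriv.mpr ⟨fun x => ?_, ?_⟩
  · exact (hasDerivAt_integral_Iic hf hfc.continuousAt).differentiableAt
  · rwa [deriv_integral_Iic hf hfc]

theorem integral_smul_eq_neg_integral_deriv_smul_integral_Iic {u : ℝ → ℝ} {a b : ℝ}
    (hu : ContDiff ℝ 1 u) (hfc : Continuous f) (hf : Function.support f ⊆ Set.Icc a b)
    (hf_zero : ∫ x, f x = 0) :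
    ∫ x, u x • f x = -∫ x, deriv u x • ∫ y in Set.Iic x, f y := by
  have f_compact := HasCompactSupport.of_support_subset_isCompact isCompact_Icc hf
  have f_int : Integrable f := hfc.integrable_of_hasCompactSupport f_compact
  have anti_compact := HasCompactSupport.of_support_subset_isCompact isCompact_Icc
    (support_integral_Iic_subset hf hf_zero)
  have anti_cont := (contDiff_one_integral_Iic f_int hfc).continuous
  refine integral_bilinear_hasDerivAt_right_eq_neg_left_of_integrable
    (L := ContinuousLinearMap.lsmul ℝ ℝ)
    (fun x _ => (hu.differentiable one_ne_zero x).hasDerivAt)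
    (fun x _ => hasDerivAt_integral_Iic f_int hfc.continuousAt) ?_ ?_ ?_
  · exact (hu.continuous.smul hfc).integrable_of_hasCompactSupport f_compact.smul_left
  · exact ((hu.continuous_deriv le_rfl).smul anti_cont).integrable_of_hasCompactSupport
      anti_compact.smul_left
  · exact (hu.continuous.smul anti_cont).integrable_of_hasCompactSupport anti_compact.smul_left

end Antiderivative

theorem iterAnti_succ' (m : ℝ → ℝ) (k : ℕ) :
    iterAnti m (k + 1) = iterAnti (fun x => ∫ y in Set.Iic x, m y) k := by
  induction k with
  | zero => rfl
  | succ k ih =>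
    funext x
    rw [iterAnti, ih, iterAnti]

/-- Cancellation of order `k`: `m` is continuous, supported in `[a, b]`, and its moments of order
`0, …, k - 1` vanish. Continuity and the support are part of the notion so that it passes to
antiderivatives, at the cost of one order of cancellation. -/
structure HasCancellation (m : ℝ → ℝ) (a b : ℝ) (k : ℕ) : Prop where
  continuous : Continuous m
  support_subset : Function.support m ⊆ Set.Icc a b
  moment_eq_zero : ∀ i < k, ∫ x, x ^ i * m x = 0

namespace HasCancellation

variable {m : ℝ → ℝ} {a b : ℝ} {k : ℕ}

theorem hasCompactSupport (hm : HasCancellation m a b k) : HasCompactSupport m :=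
  .of_support_subset_isCompact isCompact_Icc hm.support_subset

theorem integrable (hm : HasCancellation m a b k) : Integrable m :=
  hm.continuous.integrable_of_hasCompactSupport hm.hasCompactSupport

theorem integral_eq_zero (hm : HasCancellation m a b (k + 1)) : ∫ x, m x = 0 := by
  simpa only [pow_zero, one_mul] using hm.moment_eq_zero 0 k.succ_pos

theorem integral_Iic (hm : HasCancellation m a b (k + 1)) :
    HasCancellation (fun x => ∫ y in Set.Iic x, m y) a b k where
  continuous := (contDiff_one_integral_Iic hm.integrable hm.continuous).continuous
  support_subset := support_integral_Iic_subset hm.support_subset hm.integral_eq_zero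
  moment_eq_zero i hi := by
    have by_parts : ∫ x, x ^ (i + 1) * m x =
        -((i + 1 : ℝ) * ∫ x, x ^ i * ∫ y in Set.Iic x, m y) := by
      simpa [mul_assoc, integral_const_mul] using
        integral_smul_eq_neg_integral_deriv_smul_integral_Iic (contDiff_id.pow (i + 1))
          hm.continuous hm.support_subset hm.integral_eq_zero
    rw [hm.moment_eq_zero (i + 1) (by lia), zero_eq_neg] at by_parts
    exact (mul_eq_zero.mp by_parts).resolve_left i.cast_add_one_ne_zero

theorem iterAnti (hm : HasCancellation m a b k) : HasCancellation (iterAnti m k) a b 0 := by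
  induction k generalizing m with
  | zero => exact hm
  | succ k ih => exact iterAnti_succ' m k ▸ ih hm.integral_Iic

end HasCancellation

section Convolution

theorem deriv_convolution_eq_convolution_deriv {𝕜 E E' F : Type*} [RCLike 𝕜]
    [NormedAddCommGroup E] [NormedSpace 𝕜 E] [NormedAddCommGroup E'] [NormedSpace 𝕜 E']
    [NormedAddCommGroup F] [NormedSpace ℝ F] [NormedSpace 𝕜 F] (L : E →L[𝕜] E' →L[𝕜] F)
    {μ : Measure 𝕜} [μ.IsAddLeftInvariant] [μ.IsNegInvariant] [IsLocallyFiniteMeasure μ]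
    {f : 𝕜 → E} {g : 𝕜 → E'} (hf : ContDiff 𝕜 1 f) (hfc : HasCompactSupport f)
    (hg : ContDiff 𝕜 1 g) (hgc : HasCompactSupport g) :
    deriv f ⋆[L, μ] g = f ⋆[L, μ] deriv g :=
  funext fun x =>
    (hfc.hasDerivAt_convolution_left L hf hg.continuous.locallyIntegrable x).unique
      (hgc.hasDerivAt_convolution_right L hf.continuous.locallyIntegrable hg x)

theorem norm_convolution_le_of_norm_le {𝕜 G E E' F : Type*} [NontriviallyNormedField 𝕜]
    [NormedAddCommGroup E] [NormedSpace 𝕜 E] [NormedAddCommGroup E'] [NormedSpace 𝕜 E']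
    [NormedAddCommGroup F] [NormedSpace ℝ F] [NormedSpace 𝕜 F] (L : E →L[𝕜] E' →L[𝕜] F)
    [Sub G] [MeasurableSpace G] {μ : Measure G} {f : G → E} {g : G → E'} {C : ℝ}
    (hf : Integrable f μ) (hg : ∀ x, ‖g x‖ ≤ C) (x : G) :
    ‖(f ⋆[L, μ] g) x‖ ≤ ‖L‖ * (∫ y, ‖f y‖ ∂μ) * C := by
  rw [← integral_const_mul, ← integral_mul_const]
  refine norm_integral_le_of_norm_le ((hf.norm.const_mul _).mul_const _) (.of_forall fun y => ?_)
  exact (L.le_opNorm₂ _ _).trans (by gcongr; exact hg _)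

theorem convolution_eq_iterAnti_convolution_iteratedDeriv {E : Type*}
    [NormedAddCommGroup E] [NormedSpace ℝ E] {m : ℝ → ℝ} {g : ℝ → E} {a b : ℝ} {k : ℕ}
    (hm : HasCancellation m a b k) (hg : ContDiff ℝ k g) (hgc : HasCompactSupport g) :
    m ⋆ g = iterAnti m k ⋆ iteratedDeriv k g := by
  induction k generalizing m g with
  | zero => rw [iterAnti, iteratedDeriv_zero]
  | succ k ih =>
    have deriv_g : ContDiff ℝ k (deriv g) := (contDiff_succ_iff_deriv.mp hg).2.2
    calc m ⋆ g = deriv (fun x => ∫ y in Set.Iic x, m y) ⋆ g := by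
          rw [deriv_integral_Iic hm.integrable hm.continuous]
      _ = (fun x => ∫ y in Set.Iic x, m y) ⋆ deriv g :=
          deriv_convolution_eq_convolution_deriv _
            (contDiff_one_integral_Iic hm.integrable hm.continuous)
            hm.integral_Iic.hasCompactSupport (hg.of_le (by norm_cast; lia)) hgc
      _ = iterAnti m (k + 1) ⋆ iteratedDeriv (k + 1) g := by
          rw [ih hm.integral_Iic deriv_g hgc.deriv, iterAnti_succ', iteratedDeriv_succ']

end Convolution

section Rescaling

variable {E : Type*} [NormedAddCommGroup E] [NormedSpace ℝ E]

/-- The `L¹`-normalized rescaling `m_u(x) = u⁻¹ m(x / u)`, meaningful for `u > 0`; it is defined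
for every real `u`, and `rescale 0 m = 0`. -/
noncomputable def rescale (u : ℝ) (m : ℝ → E) : ℝ → E := fun x => u⁻¹ • m (x / u)

theorem rescale_rescale (s r : ℝ) (m : ℝ → E) :
    rescale s (rescale r m) = rescale (s * r) m := by
  funext x
  simp only [rescale, smul_smul, div_div, mul_inv]

theorem rescale_convolution_rescale {u : ℝ} (hu : 0 < u) (f : ℝ → ℝ) (g : ℝ → E) :
    rescale u f ⋆ rescale u g = rescale u (f ⋆ g) := by
  funext x
  have change_var := Measure.integral_comp_div (fun y => f y • g (x / u - y)) u
  simp only [convolution_def, rescale, ContinuousLinearMap.lsmul_apply, sub_div]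
  calc ∫ y, (u⁻¹ • f (y / u)) • u⁻¹ • g (x / u - y / u)
      = ∫ y, (u⁻¹ * u⁻¹) • f (y / u) • g (x / u - y / u) := by
        simp only [smul_eq_mul, smul_smul, mul_comm, mul_left_comm]
    _ = u⁻¹ • ∫ y, f y • g (x / u - y) := by
        rw [integral_smul, change_var, abs_of_pos hu, smul_smul, inv_mul_cancel_right₀ hu.ne']

theorem support_rescale_subset {u a b : ℝ} {m : ℝ → E} (hu : 0 < u)
    (hm : Function.support m ⊆ Set.Icc a b) :
    Function.support (rescale u m) ⊆ Set.Icc (u * a) (u * b) := by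
  intro x hx
  obtain ⟨ha, hb⟩ := hm (right_ne_zero_of_smul hx)
  exact ⟨(le_div_iff₀' hu).mp ha, (div_le_iff₀' hu).mp hb⟩

theorem support_rescale_convolution_rescale_subset {f : ℝ → ℝ} {g : ℝ → E}
    {a b c d s t : ℝ} (hs : 0 < s) (ht : 0 < t) (hf : Function.support f ⊆ Set.Icc a b)
    (hg : Function.support g ⊆ Set.Icc c d) :
    Function.support (rescale s f ⋆ rescale t g) ⊆ Set.Icc (s * a + t * c) (s * b + t * d) :=
  calc Function.support (rescale s f ⋆ rescale t g)
      ⊆ Function.support (rescale s f) + Function.support (rescale t g) :=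
        support_convolution_subset _
    _ ⊆ Set.Icc (s * a) (s * b) + Set.Icc (t * c) (t * d) :=
        Set.add_subset_add (support_rescale_subset hs hf) (support_rescale_subset ht hg)
    _ ⊆ Set.Icc (s * a + t * c) (s * b + t * d) := Set.Icc_add_Icc_subset _ _ _ _

theorem contDiff_rescale {n : WithTop ℕ∞} {m : ℝ → E} (hm : ContDiff ℝ n m) (u : ℝ) :
    ContDiff ℝ n (rescale u m) :=
  (hm.comp (contDiff_id.div_const u)).const_smul u⁻¹

theorem iteratedDeriv_rescale {k : ℕ} {m : ℝ → E} (hm : ContDiff ℝ k m) (u : ℝ) :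
    iteratedDeriv k (rescale u m) = u⁻¹ ^ k • rescale u (iteratedDeriv k m) := by
  have rescale_eq : rescale u m = u⁻¹ • fun x => m (u⁻¹ * x) := by
    funext x
    simp only [rescale, Pi.smul_apply, div_eq_inv_mul]
  funext x
  rw [rescale_eq, iteratedDeriv_const_smul_field, iteratedDeriv_comp_const_smul hm]
  simp only [rescale, Pi.smul_apply, div_eq_inv_mul]
  exact smul_comm _ _ _

theorem hasCompactSupport_rescale {u : ℝ} {m : ℝ → E} (hu : u ≠ 0) (hm : HasCompactSupport m) :
    HasCompactSupport (rescale u m) := by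
  have comp_inv_smul : HasCompactSupport fun x => m (u⁻¹ • x) := hm.comp_smul (inv_ne_zero hu)
  simp only [smul_eq_mul, ← div_eq_inv_mul] at comp_inv_smul
  exact comp_inv_smul.smul_left (f := fun _ => u⁻¹)

theorem norm_convolution_rescale_le {m : ℝ → ℝ} {g : ℝ → E} {a b r C : ℝ} {k : ℕ}
    (hm : HasCancellation m a b k) (hg : ContDiff ℝ k g) (hgc : HasCompactSupport g)
    (hgC : ∀ y, ‖iteratedDeriv k g y‖ ≤ C) (hr : 0 < r) (x : ℝ) :
    ‖(m ⋆ rescale r g) x‖ ≤ (∫ y, ‖iterAnti m k y‖) * (r⁻¹ ^ k * (r⁻¹ * C)) := by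
  have deriv_bound (y : ℝ) : ‖iteratedDeriv k (rescale r g) y‖ ≤ r⁻¹ ^ k * (r⁻¹ * C) := by
    rw [iteratedDeriv_rescale hg, Pi.smul_apply, rescale, norm_smul_of_nonneg (by positivity),
      norm_smul_of_nonneg (by positivity)]
    gcongr
    exact hgC _
  have bound_nonneg := (norm_nonneg _).trans (deriv_bound 0)
  rw [convolution_eq_iterAnti_convolution_iteratedDeriv hm (contDiff_rescale hg r)
    (hasCompactSupport_rescale hr.ne' hgc)]
  refine (norm_convolution_le_of_norm_le _ hm.iterAnti.integrable deriv_bound x).trans ?_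
  gcongr
  exact mul_le_of_le_one_left (by positivity) ContinuousLinearMap.opNorm_lsmul_le

theorem norm_rescale_convolution_rescale_le {m : ℝ → ℝ} {g : ℝ → E} {a b s t C : ℝ} {k : ℕ}
    (hm : HasCancellation m a b k) (hg : ContDiff ℝ k g) (hgc : HasCompactSupport g)
    (hgC : ∀ y, ‖iteratedDeriv k g y‖ ≤ C) (hs : 0 < s) (ht : 0 < t) (x : ℝ) :
    ‖(rescale s m ⋆ rescale t g) x‖ ≤ (s / t) ^ k * t⁻¹ * (∫ y, ‖iterAnti m k y‖) * C := by
  have factor_scale : rescale s m ⋆ rescale t g = rescale s (m ⋆ rescale (t / s) g) := by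
    rw [← rescale_convolution_rescale hs, rescale_rescale, mul_div_cancel₀ t hs.ne']
  calc ‖(rescale s m ⋆ rescale t g) x‖ = s⁻¹ * ‖(m ⋆ rescale (t / s) g) (x / s)‖ := by
        rw [factor_scale, rescale, norm_smul_of_nonneg (by positivity)]
    _ ≤ s⁻¹ * ((∫ y, ‖iterAnti m k y‖) * ((t / s)⁻¹ ^ k * ((t / s)⁻¹ * C))) := by
        gcongr
        exact norm_convolution_rescale_le hm hg hgc hgC (div_pos ht hs) _
    _ = (s / t) ^ k * t⁻¹ * (∫ y, ‖iterAnti m k y‖) * C := by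
        rw [inv_div]
        field_simp

theorem norm_iteratedDeriv_le_iSup {g : ℝ → E} {k : ℕ} (hg : ContDiff ℝ k g)
    (hgc : HasCompactSupport g) (x : ℝ) :
    ‖iteratedDeriv k g x‖ ≤ ⨆ y, ‖iteratedDeriv k g y‖ := by
  have compact : HasCompactSupport (iteratedDeriv k g) := by
    rw [iteratedDeriv_eq_equiv_comp]
    exact (hgc.iteratedFDeriv k).comp_left (map_zero _)
  have cont : Continuous (iteratedDeriv k g) := hg.continuous_iteratedDeriv k le_rfl
  exact le_ciSup (cont.norm.bddAbove_range_of_hasCompactSupport compact.norm) x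

theorem moment_cancellation_convolution_general {m₁ : ℝ → ℝ} {m₂ : ℝ → E} {a b c d : ℝ} {k : ℕ}
    (hm₁ : HasCancellation m₁ a b k) (hm₂ : ContDiff ℝ k m₂)
    (hm₂supp : Function.support m₂ ⊆ Set.Icc c d) :
    Function.support (iterAnti m₁ k) ⊆ Set.Icc a b ∧
    ∀ s t : ℝ, 0 < s → 0 < t →
      Function.support (rescale s m₁ ⋆ rescale t m₂) ⊆
        Set.Icc (s * a + t * c) (s * b + t * d) ∧
      ∀ x, ‖(rescale s m₁ ⋆ rescale t m₂) x‖ ≤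
        (s / t) ^ k * t⁻¹ * (∫ y, ‖iterAnti m₁ k y‖) * ⨆ y, ‖iteratedDeriv k m₂ y‖ := by
  have hm₂c : HasCompactSupport m₂ := .of_support_subset_isCompact isCompact_Icc hm₂supp
  refine ⟨hm₁.iterAnti.support_subset, fun s t hs ht => ⟨?_, fun x => ?_⟩⟩
  · exact support_rescale_convolution_rescale_subset hs ht hm₁.support_subset hm₂supp
  · exact norm_rescale_convolution_rescale_le hm₁ hm₂ hm₂c (norm_iteratedDeriv_le_iSup hm₂ hm₂c)
      hs ht x

end Rescaling

/-- Moment cancellation and convolution at two scales: if `m₁` is continuous, supported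
in `[1/2,2]`, with vanishing moments up to order `k−1`, and `m₂` is `C^k` with support
in `[1/2,2]`, then (i) the `k`-th iterated antiderivative `F_k` of `m₁` is supported in
`[1/2,2]`, and (ii) for `0 < s ≤ t` the convolution `m₁_s ∗ m₂_t` of the rescalings
`m_u(x) = u⁻¹ m(x/u)` is supported in `[(s+t)/2, 2(s+t)]` and bounded by
`(s/t)^k t⁻¹ ‖F_k‖_{L¹} ‖m₂^{(k)}‖_∞`. -/
theorem moment_cancellation_convolution (k : ℕ) (hk : 1 ≤ k)
    (m₁ m₂ : ℝ → ℝ)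
    (hm₁c : Continuous m₁)
    (hm₁supp : Function.support m₁ ⊆ Set.Icc (1 / 2 : ℝ) 2)
    (hmom : ∀ i : ℕ, i < k → ∫ x : ℝ, x ^ i * m₁ x = 0)
    (hm₂ : ContDiff ℝ (k : ℕ∞) m₂)
    (hm₂supp : Function.support m₂ ⊆ Set.Icc (1 / 2 : ℝ) 2) :
    Function.support (iterAnti m₁ k) ⊆ Set.Icc (1 / 2 : ℝ) 2 ∧
    ∀ s t : ℝ, 0 < s → s ≤ t →
      (∀ x : ℝ, (∫ y : ℝ, s⁻¹ * m₁ ((x - y) / s) * (t⁻¹ * m₂ (y / t))) ≠ 0 →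
        x ∈ Set.Icc ((s + t) / 2) (2 * (s + t))) ∧
      (∀ x : ℝ, |∫ y : ℝ, s⁻¹ * m₁ ((x - y) / s) * (t⁻¹ * m₂ (y / t))|
        ≤ (s / t) ^ k * t⁻¹ * (∫ y : ℝ, |iterAnti m₁ k y|) *
          ⨆ y : ℝ, |iteratedDeriv k m₂ y|) := by
  refine (moment_cancellation_convolution_general ⟨hm₁c, hm₁supp, hmom⟩ hm₂ hm₂supp).imp_right
    fun conv s t hs hst => ?_
  simpa [Set.subset_def, rescale, convolution_lsmul_swap, add_div, mul_add, ← div_eq_mul_inv,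
    mul_comm _ (2 : ℝ)] using conv s t hs (hs.trans_le hst)
end

section
/- For every real d with 0 < d < 4 and every real a ≥ 1, there exists a constant C, depending only on a and d, such that for all r ∈ (0,1]: ∫_0^1 ∫_0^1 (r/(r+t₁))^a (r/(r+t₂))^a (t₁+t₂)^{−d/2} (r+t₁+t₂)^{−d/2} dt₁ dt₂ ≤ C r^{2−d}. -/
/-!
The integrand is jointly homogeneous of degree `-d` in `(r, t₁, t₂)`, so its integral over the
quadrant `(0, ∞)²` is `r ^ (2 - d)` times the same integral at `r = 1`, and only integrability over
the quadrant remains. Distributing the two factors depending on `t₁ + t₂` evenly over `t₁` and `t₂`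
bounds the integrand by a product `g t₁ * g t₂`, where `g t` is of order `t ^ (-d / 4)` at `0` and
`t ^ (-a - d / 2)` at infinity.
-/

open MeasureTheory Set

lemma integrableOn_Ioi_rpow_mul_add_rpow {p q r : ℝ} (hr : 0 < r) (hp : -1 < p)
    (hpq : p + q < -1) : IntegrableOn (fun t : ℝ ↦ t ^ p * (r + t) ^ q) (Ioi 0) := by
  rw [← Ioc_union_Ioi_eq_Ioi (zero_le_one' ℝ)]
  refine IntegrableOn.union ?near_zero ?near_infinity
  case near_zero =>
    have rpow_integrable : IntegrableOn (fun t : ℝ ↦ t ^ p) (Icc 0 1) := by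
      rw [integrableOn_Icc_iff_integrableOn_Ioc,
        ← intervalIntegrable_iff_integrableOn_Ioc_of_le zero_le_one]
      exact intervalIntegral.intervalIntegrable_rpow' hp
    have add_rpow_continuous : ContinuousOn (fun t : ℝ ↦ (r + t) ^ q) (Icc 0 1) :=
      ContinuousOn.rpow_const (by fun_prop) fun t ht ↦ Or.inl (add_pos_of_pos_of_nonneg hr ht.1).ne'
    exact (rpow_integrable.mul_continuousOn add_rpow_continuous isCompact_Icc).mono_set
      Ioc_subset_Icc_self
  case near_infinity =>
    refine Integrable.mono' (integrableOn_Ioi_rpow_of_lt hpq one_pos)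
      (by fun_prop : Measurable _).aestronglyMeasurable ?_
    filter_upwards [ae_restrict_mem measurableSet_Ioi] with t (ht : 1 < t)
    have ht₀ : 0 < t := one_pos.trans ht
    rw [Real.norm_of_nonneg (by positivity), Real.rpow_add ht₀]
    gcongr ?_ * ?_
    exact Real.rpow_le_rpow_of_nonpos ht₀ (by linarith) (by linarith)

lemma rpow_le_rpow_half_mul_rpow_half {x y z s : ℝ} (hx : 0 < x) (hy : 0 < y) (hxz : x ≤ z)
    (hyz : y ≤ z) (hs : s ≤ 0) : z ^ s ≤ x ^ (s / 2) * y ^ (s / 2) := by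
  have hs₂ : s / 2 ≤ 0 := by linarith
  calc z ^ s = z ^ (s / 2) * z ^ (s / 2) := by
        rw [← Real.rpow_add (hx.trans_le hxz), add_halves]
    _ ≤ x ^ (s / 2) * y ^ (s / 2) :=
        mul_le_mul (Real.rpow_le_rpow_of_nonpos hx hxz hs₂) (Real.rpow_le_rpow_of_nonpos hy hyz hs₂)
          (Real.rpow_nonneg (hy.le.trans hyz) _) (Real.rpow_nonneg hx.le _)

/-- The integrand of the paired-contraction term at observation scale `r`, as a function of the
scale parameters `x = t₁` and `y = t₂`; it is meaningful for positive `r`, `x`, `y` only. -/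
noncomputable def contractionKernel (d a r x y : ℝ) : ℝ :=
  (r / (r + x)) ^ a * (r / (r + y)) ^ a * (x + y) ^ (-(d / 2)) * (r + x + y) ^ (-(d / 2))

namespace contractionKernel

variable {d a r x y : ℝ}

lemma nonneg (hr : 0 ≤ r) (hx : 0 ≤ x) (hy : 0 ≤ y) : 0 ≤ contractionKernel d a r x y := by
  unfold contractionKernel
  positivity

lemma measurable_uncurry (d a r : ℝ) :
    Measurable (Function.uncurry (contractionKernel d a r)) := by
  unfold contractionKernel Function.uncurry
  fun_prop

lemma homogeneous {c : ℝ} (hc : 0 < c) (hr : 0 ≤ r) (hx : 0 ≤ x) (hy : 0 ≤ y) :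
    contractionKernel d a (c * r) (c * x) (c * y) = c ^ (-d) * contractionKernel d a r x y := by
  have hcd : c ^ (-d) = c ^ (-(d / 2)) * c ^ (-(d / 2)) := by
    rw [← Real.rpow_add hc]
    ring_nf
  unfold contractionKernel
  rw [← mul_add, ← mul_add, ← mul_add, ← mul_add, mul_div_mul_left _ _ hc.ne',
    mul_div_mul_left _ _ hc.ne', Real.mul_rpow hc.le (by positivity),
    Real.mul_rpow hc.le (by positivity), hcd]
  ring

lemma setIntegral_Ioi_eq_rpow_mul (d a : ℝ) (hr : 0 < r) :
    ∫ x in Ioi 0, ∫ y in Ioi 0, contractionKernel d a r x y =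
      r ^ (2 - d) * ∫ x in Ioi 0, ∫ y in Ioi 0, contractionKernel d a 1 x y := by
  have rescale : ∀ x ∈ Ioi (0 : ℝ), ∀ y ∈ Ioi (0 : ℝ), contractionKernel d a r x y =
      r ^ (-d) * contractionKernel d a 1 (r⁻¹ * x) (r⁻¹ * y) := by
    intro x (hx : 0 < x) y (hy : 0 < y)
    rw [← homogeneous hr zero_le_one (by positivity) (by positivity), mul_one,
      mul_inv_cancel_left₀ hr.ne', mul_inv_cancel_left₀ hr.ne']
  have inner : ∀ x ∈ Ioi (0 : ℝ), ∫ y in Ioi 0, contractionKernel d a r x y =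
      r ^ (-d) * (r * ∫ y in Ioi 0, contractionKernel d a 1 (r⁻¹ * x) y) := by
    intro x hx
    rw [setIntegral_congr_fun measurableSet_Ioi (rescale x hx), integral_const_mul,
      integral_comp_mul_left_Ioi (contractionKernel d a 1 (r⁻¹ * x)) 0 (inv_pos.2 hr),
      inv_inv, mul_zero, smul_eq_mul]
  rw [setIntegral_congr_fun measurableSet_Ioi inner, integral_const_mul, integral_const_mul,
    integral_comp_mul_left_Ioi (fun x ↦ ∫ y in Ioi 0, contractionKernel d a 1 x y) 0
      (inv_pos.2 hr), inv_inv, mul_zero, smul_eq_mul, sub_eq_neg_add, Real.rpow_add hr,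
    Real.rpow_two]
  ring

lemma le_separated_product (hd : 0 ≤ d) (hr : 0 < r) (hx : 0 < x) (hy : 0 < y) :
    contractionKernel d a r x y ≤
      r ^ a * (x ^ (-(d / 4)) * (r + x) ^ (-a - d / 4)) *
        (r ^ a * (y ^ (-(d / 4)) * (r + y) ^ (-a - d / 4))) := by
  have quarter : -(d / 2) / 2 = -(d / 4) := by ring
  have split_sum : (x + y) ^ (-(d / 2)) ≤ x ^ (-(d / 4)) * y ^ (-(d / 4)) := by
    rw [← quarter]
    apply rpow_le_rpow_half_mul_rpow_half <;> linarith
  have split_shifted_sum :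
      (r + x + y) ^ (-(d / 2)) ≤ (r + x) ^ (-(d / 4)) * (r + y) ^ (-(d / 4)) := by
    rw [← quarter]
    apply rpow_le_rpow_half_mul_rpow_half <;> linarith
  have merge : ∀ t, 0 < t → (r / (r + t)) ^ a * (r + t) ^ (-(d / 4)) =
      r ^ a * (r + t) ^ (-a - d / 4) := by
    intro t ht
    have hrt : 0 < r + t := add_pos hr ht
    rw [Real.div_rpow hr.le hrt.le, sub_eq_add_neg, Real.rpow_add hrt, Real.rpow_neg hrt.le a,
      div_eq_mul_inv, mul_assoc]
  calc contractionKernel d a r x y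
      ≤ (r / (r + x)) ^ a * (r / (r + y)) ^ a * (x ^ (-(d / 4)) * y ^ (-(d / 4))) *
          ((r + x) ^ (-(d / 4)) * (r + y) ^ (-(d / 4))) := by
        unfold contractionKernel
        gcongr
    _ = x ^ (-(d / 4)) * ((r / (r + x)) ^ a * (r + x) ^ (-(d / 4))) *
          (y ^ (-(d / 4)) * ((r / (r + y)) ^ a * (r + y) ^ (-(d / 4)))) := by ring
    _ = _ := by
        rw [merge x hx, merge y hy]
        ring

lemma integrableOn_Ioi_prod_Ioi (hd₀ : 0 ≤ d) (hd₄ : d < 4) (had : 1 < a + d / 2) (hr : 0 < r) :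
    IntegrableOn (Function.uncurry (contractionKernel d a r)) (Ioi 0 ×ˢ Ioi 0) := by
  have factor_integrable :
      IntegrableOn (fun t : ℝ ↦ r ^ a * (t ^ (-(d / 4)) * (r + t) ^ (-a - d / 4))) (Ioi 0) :=
    (integrableOn_Ioi_rpow_mul_add_rpow hr (by linarith) (by linarith)).const_mul _
  have product_integrable := factor_integrable.mul_prod factor_integrable
  rw [Measure.prod_restrict] at product_integrable
  refine product_integrable.mono' (measurable_uncurry d a r).aestronglyMeasurable ?_
  filter_upwards [ae_restrict_mem (measurableSet_Ioi.prod measurableSet_Ioi)]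
    with ⟨x, y⟩ ⟨(hx : 0 < x), (hy : 0 < y)⟩
  rw [Function.uncurry_apply_pair, Real.norm_of_nonneg (nonneg hr.le hx.le hy.le)]
  exact le_separated_product hd₀ hr hx hy

lemma setIntegral_le_setIntegral_Ioi (hd₀ : 0 ≤ d) (hd₄ : d < 4) (had : 1 < a + d / 2)
    (hr : 0 < r) {S T : Set ℝ} (hS : S ⊆ Ioi 0) (hT : T ⊆ Ioi 0) :
    ∫ x in S, ∫ y in T, contractionKernel d a r x y ≤
      ∫ x in Ioi 0, ∫ y in Ioi 0, contractionKernel d a r x y := by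
  have integrable := integrableOn_Ioi_prod_Ioi hd₀ hd₄ had hr
  have hST : S ×ˢ T ⊆ Ioi 0 ×ˢ Ioi 0 := prod_mono hS hT
  calc ∫ x in S, ∫ y in T, contractionKernel d a r x y
      = ∫ p in S ×ˢ T, Function.uncurry (contractionKernel d a r) p :=
        (setIntegral_prod _ (integrable.mono_set hST)).symm
    _ ≤ ∫ p in Ioi 0 ×ˢ Ioi 0, Function.uncurry (contractionKernel d a r) p := by
        refine setIntegral_mono_set integrable ?_ hST.eventuallyLE
        filter_upwards [ae_restrict_mem (measurableSet_Ioi.prod measurableSet_Ioi)]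
          with p hp using nonneg hr.le (le_of_lt hp.1) (le_of_lt hp.2)
    _ = ∫ x in Ioi 0, ∫ y in Ioi 0, contractionKernel d a r x y := setIntegral_prod _ integrable

end contractionKernel

theorem quadratic_renormalisation_integral_general (d a : ℝ) (hd₀ : 0 ≤ d) (hd₄ : d < 4)
    (had : 1 < a + d / 2) :
    ∃ C : ℝ, 0 < C ∧ ∀ r > 0, ∀ S ⊆ Ioi (0 : ℝ), ∀ T ⊆ Ioi (0 : ℝ),
      ∫ t₁ in S, ∫ t₂ in T, contractionKernel d a r t₁ t₂ ≤ C * r ^ (2 - d) := by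
  set I := ∫ x in Ioi 0, ∫ y in Ioi 0, contractionKernel d a 1 x y
  have hI : 0 ≤ I := setIntegral_nonneg measurableSet_Ioi fun x hx ↦
    setIntegral_nonneg measurableSet_Ioi fun y hy ↦
      contractionKernel.nonneg zero_le_one (le_of_lt hx) (le_of_lt hy)
  refine ⟨I + 1, by positivity, fun r hr S hS T hT ↦ ?_⟩
  calc ∫ t₁ in S, ∫ t₂ in T, contractionKernel d a r t₁ t₂
      ≤ ∫ t₁ in Ioi 0, ∫ t₂ in Ioi 0, contractionKernel d a r t₁ t₂ :=
        contractionKernel.setIntegral_le_setIntegral_Ioi hd₀ hd₄ had hr hS hT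
    _ = I * r ^ (2 - d) := by
        rw [contractionKernel.setIntegral_Ioi_eq_rpow_mul d a hr, mul_comm]
    _ ≤ (I + 1) * r ^ (2 - d) := by
        gcongr
        exact le_add_of_nonneg_right zero_le_one

/-- The integral estimate from the renormalisation of the quadratic terms of the
parabolic Anderson model: for `0 < d < 4` and `a ≥ 1` there is a constant `C`,
depending only on `a` and `d`, such that for all `r ∈ (0,1]`:
`∫₀¹∫₀¹ (r/(r+t₁))^a (r/(r+t₂))^a (t₁+t₂)^{−d/2} (r+t₁+t₂)^{−d/2} dt₁ dt₂ ≤ C r^{2−d}`. -/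
theorem quadratic_renormalisation_integral (d a : ℝ)
    (hd0 : 0 < d) (hd4 : d < 4) (ha : 1 ≤ a) :
    ∃ C : ℝ, 0 < C ∧ ∀ r ∈ Set.Ioc (0 : ℝ) 1,
      (∫ t₁ in Set.Ioc (0 : ℝ) 1, ∫ t₂ in Set.Ioc (0 : ℝ) 1,
          (r / (r + t₁)) ^ a * (r / (r + t₂)) ^ a * (t₁ + t₂) ^ (-(d / 2)) *
            (r + t₁ + t₂) ^ (-(d / 2)))
        ≤ C * r ^ (2 - d) := by
  obtain ⟨C, hC, bound⟩ :=
    quadratic_renormalisation_integral_general d a hd0.le hd4 (by linarith)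
  exact ⟨C, hC, fun r hr ↦ bound r hr.1 _ Ioc_subset_Ioi_self _ Ioc_subset_Ioi_self⟩
end

section
/- For every real d with 0 < d < 4 and every real a ≥ 3, there exists a constant C, depending only on a and d, such that for all r ∈ (0,1]: ∫_0^1 ∫_0^1 (r/(r+t₁))^a (r/(r+t₂))^a (t₁ t₂)^{−d/2} (r+t₁+t₂)^{−d/2} t₁ t₂ dt₁ dt₂ ≤ C r^{4−3d/2}. -/
/-!
Since `d ≥ 0`, the coupling factor satisfies `(r + t₁ + t₂) ^ (-d/2) ≤ r ^ (-d/2)`, and what is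
left of the integrand is a product of two copies of `t ^ (1 - d/2) * (r / (r + t)) ^ a`.
Substituting `t = r s` shows that each copy integrates over `(0, ∞)` to `r ^ (2 - d/2)` times a
constant, which is finite because `d < 4` gives integrability at `0` and `2 - d/2 < a` gives
integrability at `∞`.
-/

section

open MeasureTheory Set Filter Asymptotics
open scoped Topology

theorem integral_integral_le_integral_mul_integral {α β : Type*} [MeasurableSpace α]
    [MeasurableSpace β] {μ : Measure α} {ν : Measure β} {F : α → β → ℝ} {f : α → ℝ} {g : β → ℝ}
    (hf : Integrable f μ) (hg : Integrable g ν) (hF : ∀ᵐ x ∂μ, ∀ᵐ y ∂ν, 0 ≤ F x y)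
    (hFfg : ∀ᵐ x ∂μ, ∀ᵐ y ∂ν, F x y ≤ f x * g y) :
    ∫ x, ∫ y, F x y ∂ν ∂μ ≤ (∫ x, f x ∂μ) * ∫ y, g y ∂ν := by
  have inner_nonneg : ∀ᵐ x ∂μ, 0 ≤ ∫ y, F x y ∂ν := hF.mono fun _ => integral_nonneg_of_ae
  have inner_le : ∀ᵐ x ∂μ, ∫ y, F x y ∂ν ≤ f x * ∫ y, g y ∂ν := by
    filter_upwards [hF, hFfg] with x hx hxfg
    rw [← integral_const_mul]
    exact integral_mono_of_nonneg hx (hg.const_mul _) hxfg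
  rw [← integral_mul_const]
  exact integral_mono_of_nonneg inner_nonneg (hf.mul_const _) inner_le

/-- The power `t ^ q` damped at order `a` beyond the scale `r`. The integrand of the trilinear
estimate is controlled by a product of two of these, with `q = 1 - d / 2`. -/
noncomputable def dampedPower (a q r t : ℝ) : ℝ :=
  t ^ q * (r / (r + t)) ^ a

variable {a q r t : ℝ}

theorem dampedPower_nonneg (hr : 0 ≤ r) (ht : 0 ≤ t) : 0 ≤ dampedPower a q r t := by
  unfold dampedPower
  positivity

theorem dampedPower_eq_rpow_mul_dampedPower_one (hr : 0 < r) (ht : 0 ≤ t) :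
    dampedPower a q r t = r ^ q * dampedPower a q 1 (r⁻¹ * t) := by
  have rescale : r / (r + t) = 1 / (1 + r⁻¹ * t) := by field_simp
  have split : t ^ q = r ^ q * (r⁻¹ * t) ^ q := by
    rw [← Real.mul_rpow hr.le (by positivity), mul_inv_cancel_left₀ hr.ne']
  rw [dampedPower, dampedPower, rescale, split, mul_assoc]

theorem integrableOn_dampedPower_one (hq : -1 < q) (hqa : q + 1 < a) :
    IntegrableOn (dampedPower a q 1) (Ioi 0) := by
  have ha : 0 ≤ a := by linarith
  have locally_integrable : LocallyIntegrableOn (fun t : ℝ => (1 / (1 + t)) ^ a) (Ioi 0) := by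
    refine ContinuousOn.locallyIntegrableOn (fun t (ht : 0 < t) => ?_) measurableSet_Ioi
    have : 1 + t ≠ 0 := by positivity
    fun_prop (disch := simp [*])
  have decay_atTop : (fun t : ℝ => (1 / (1 + t)) ^ a) =O[atTop] fun t => t ^ (-a) := by
    refine .of_norm_eventuallyLE ?_
    filter_upwards [eventually_gt_atTop 0] with t ht
    rw [Real.norm_of_nonneg (by positivity), Real.rpow_neg ht.le, ← Real.inv_rpow ht.le, one_div]
    gcongr
    linarith
  have bounded_at_zero : (fun t : ℝ => (1 / (1 + t)) ^ a) =O[𝓝[>] 0] fun t => t ^ (-0 : ℝ) := by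
    refine .of_norm_eventuallyLE ?_
    filter_upwards [self_mem_nhdsWithin] with t (ht : 0 < t)
    rw [Real.norm_of_nonneg (by positivity), neg_zero, Real.rpow_zero]
    exact Real.rpow_le_one (by positivity) (div_le_one_of_le₀ (by linarith) (by positivity)) ha
  have integrable := mellin_convergent_of_isBigO_scalar locally_integrable decay_atTop hqa
    bounded_at_zero (by linarith)
  rwa [add_sub_cancel_right] at integrable

theorem integrableOn_dampedPower (hq : -1 < q) (hqa : q + 1 < a) (hr : 0 < r) :
    IntegrableOn (dampedPower a q r) (Ioi 0) := by
  have rescaled : IntegrableOn (fun t => dampedPower a q 1 (r⁻¹ * t)) (Ioi 0) := by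
    rw [integrableOn_Ioi_comp_mul_left_iff _ _ (inv_pos.2 hr), mul_zero]
    exact integrableOn_dampedPower_one hq hqa
  exact IntegrableOn.congr_fun (rescaled.const_mul (r ^ q))
    (fun t ht => (dampedPower_eq_rpow_mul_dampedPower_one hr (le_of_lt ht)).symm) measurableSet_Ioi

theorem integral_dampedPower (hr : 0 < r) :
    ∫ t in Ioi 0, dampedPower a q r t = r ^ (q + 1) * ∫ s in Ioi 0, dampedPower a q 1 s := by
  calc ∫ t in Ioi 0, dampedPower a q r t
      = ∫ t in Ioi 0, r ^ q * dampedPower a q 1 (r⁻¹ * t) :=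
        setIntegral_congr_fun measurableSet_Ioi fun t ht =>
          dampedPower_eq_rpow_mul_dampedPower_one hr (le_of_lt ht)
    _ = r ^ (q + 1) * ∫ s in Ioi 0, dampedPower a q 1 s := by
        rw [integral_const_mul, integral_comp_mul_left_Ioi _ _ (inv_pos.2 hr), mul_zero, inv_inv,
          smul_eq_mul, ← mul_assoc, Real.rpow_add_one hr.ne']

theorem setIntegral_dampedPower_le {S : Set ℝ} (hS : S ⊆ Ioi 0) (hq : -1 < q) (hqa : q + 1 < a)
    (hr : 0 < r) :
    ∫ t in S, dampedPower a q r t ≤ r ^ (q + 1) * ∫ s in Ioi 0, dampedPower a q 1 s := by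
  rw [← integral_dampedPower hr]
  exact setIntegral_mono_set (integrableOn_dampedPower hq hqa hr)
    (ae_restrict_of_forall_mem measurableSet_Ioi fun t ht => dampedPower_nonneg hr.le (le_of_lt ht))
    hS.eventuallyLE

theorem trilinear_integrand_le_dampedPower_mul_dampedPower {b t₁ t₂ : ℝ} (hb : 0 ≤ b) (hr : 0 < r)
    (ht₁ : 0 < t₁) (ht₂ : 0 < t₂) :
    (r / (r + t₁)) ^ a * (r / (r + t₂)) ^ a * (t₁ * t₂) ^ (-b) * (r + t₁ + t₂) ^ (-b) * (t₁ * t₂) ≤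
      r ^ (-b) * dampedPower a (1 - b) r t₁ * dampedPower a (1 - b) r t₂ := by
  have coupling_le : (r + t₁ + t₂) ^ (-b) ≤ r ^ (-b) :=
    Real.rpow_le_rpow_of_nonpos hr (by linarith) (by linarith)
  have rpow_one_sub {t : ℝ} (ht : 0 < t) : t ^ (1 - b) = t ^ (-b) * t := by
    rw [← Real.rpow_add_one ht.ne', neg_add_eq_sub]
  calc _ ≤ (r / (r + t₁)) ^ a * (r / (r + t₂)) ^ a * (t₁ * t₂) ^ (-b) * r ^ (-b) * (t₁ * t₂) := by
        gcongr
    _ = _ := by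
        rw [dampedPower, dampedPower, rpow_one_sub ht₁, rpow_one_sub ht₂,
          Real.mul_rpow ht₁.le ht₂.le]
        ring

theorem setIntegral_trilinear_integrand_le {b : ℝ} {S : Set ℝ} (hS : MeasurableSet S)
    (hS_pos : S ⊆ Ioi 0) (hb : 0 ≤ b) (hb2 : b < 2) (hba : 2 - b < a) (hr : 0 < r) :
    (∫ t₁ in S, ∫ t₂ in S, (r / (r + t₁)) ^ a * (r / (r + t₂)) ^ a * (t₁ * t₂) ^ (-b) *
        (r + t₁ + t₂) ^ (-b) * (t₁ * t₂)) ≤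
      (∫ s in Ioi 0, dampedPower a (1 - b) 1 s) ^ 2 * r ^ (4 - 3 * b) := by
  have hq : -1 < 1 - b := by linarith
  have hqa : 1 - b + 1 < a := by linarith
  set k := dampedPower a (1 - b) r
  set K := ∫ s in Ioi 0, dampedPower a (1 - b) 1 s
  have k_integrable : IntegrableOn k S := (integrableOn_dampedPower hq hqa hr).mono_set hS_pos
  have k_integral_nonneg : 0 ≤ ∫ t in S, k t :=
    setIntegral_nonneg hS fun t ht => dampedPower_nonneg hr.le (le_of_lt (hS_pos ht))
  have k_integral_le : ∫ t in S, k t ≤ r ^ (1 - b + 1) * K :=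
    setIntegral_dampedPower_le hS_pos hq hqa hr
  calc _ ≤ (∫ t in S, r ^ (-b) * k t) * ∫ t in S, k t := by
        refine integral_integral_le_integral_mul_integral (k_integrable.const_mul _) k_integrable
          (ae_restrict_of_forall_mem hS fun t₁ ht₁ => ae_restrict_of_forall_mem hS fun t₂ ht₂ => ?_)
          (ae_restrict_of_forall_mem hS fun t₁ ht₁ => ae_restrict_of_forall_mem hS fun t₂ ht₂ =>
            trilinear_integrand_le_dampedPower_mul_dampedPower hb hr (hS_pos ht₁) (hS_pos ht₂))
        have : 0 < t₁ := hS_pos ht₁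
        have : 0 < t₂ := hS_pos ht₂
        positivity
    _ = r ^ (-b) * (∫ t in S, k t) ^ 2 := by rw [integral_const_mul]; ring
    _ ≤ r ^ (-b) * (r ^ (1 - b + 1) * K) ^ 2 := by gcongr
    _ = K ^ 2 * (r ^ (-b) * r ^ (1 - b + 1) * r ^ (1 - b + 1)) := by ring
    _ = K ^ 2 * r ^ (4 - 3 * b) := by
        rw [← Real.rpow_add hr, ← Real.rpow_add hr]
        ring_nf

end

theorem trilinear_renormalisation_integral_general (d a : ℝ)
    (hd0 : 0 ≤ d) (hd4 : d < 4) (ha : 2 - d / 2 < a) :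
    ∃ C : ℝ, 0 < C ∧ ∀ r > 0, ∀ S ⊆ Set.Ioi (0 : ℝ), MeasurableSet S →
      (∫ t₁ in S, ∫ t₂ in S,
          (r / (r + t₁)) ^ a * (r / (r + t₂)) ^ a * (t₁ * t₂) ^ (-(d / 2)) *
            (r + t₁ + t₂) ^ (-(d / 2)) * (t₁ * t₂))
        ≤ C * r ^ (4 - 3 * d / 2) := by
  refine ⟨(∫ s in Set.Ioi 0, dampedPower a (1 - d / 2) 1 s) ^ 2 + 1, by positivity, ?_⟩
  intro r hr S hS_pos hS
  rw [mul_div_assoc]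
  refine (setIntegral_trilinear_integrand_le hS hS_pos (by linarith) (by linarith) ha hr).trans ?_
  gcongr
  linarith

/-- The integral estimate from the renormalisation of the trilinear terms of the
parabolic Anderson model: for `0 < d < 4` and `a ≥ 3` there is a constant `C`,
depending only on `a` and `d`, such that for all `r ∈ (0,1]`:
`∫₀¹∫₀¹ (r/(r+t₁))^a (r/(r+t₂))^a (t₁t₂)^{−d/2} (r+t₁+t₂)^{−d/2} t₁ t₂ dt₁ dt₂
  ≤ C r^{4−3d/2}`. -/
theorem trilinear_renormalisation_integral (d a : ℝ)
    (hd0 : 0 < d) (hd4 : d < 4) (ha : 3 ≤ a) :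
    ∃ C : ℝ, 0 < C ∧ ∀ r ∈ Set.Ioc (0 : ℝ) 1,
      (∫ t₁ in Set.Ioc (0 : ℝ) 1, ∫ t₂ in Set.Ioc (0 : ℝ) 1,
          (r / (r + t₁)) ^ a * (r / (r + t₂)) ^ a * (t₁ * t₂) ^ (-(d / 2)) *
            (r + t₁ + t₂) ^ (-(d / 2)) * (t₁ * t₂))
        ≤ C * r ^ (4 - 3 * d / 2) := by
  obtain ⟨C, hC, bound⟩ := trilinear_renormalisation_integral_general d a hd0.le hd4 (by linarith)
  exact ⟨C, hC, fun r hr => bound r hr.1 _ Set.Ioc_subset_Ioi_self measurableSet_Ioc⟩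
end
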